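/- arXiv:1106.4075 — 3 statements merged into one kernel-verified Lean document; each statement's English description precedes it below -/
import Mathlib

section
/- Let G_γ(x,y) = exp(−‖x−y‖²/γ) be the Gaussian kernel on ℝ^d with parameter γ > 0 (Euclidean norm ‖·‖), and let E_σ(x,y) = exp(−‖x−y‖₁/σ) be the ℓ¹-norm exponential kernel with parameter σ > 0, where ‖z‖₁ = ∑_{j=1}^d |z_j|. Then for all d ∈ ℕ and all γ, σ > 0: (a) there is no λ ≥ 0 for which λG_γ − E_σ is a positive semidefinite kernel on ℝ^d; (b) λE_σ − G_γ is a positive semidefinite kernel on ℝ^d for λ = (max(1, 4σ²/γ) · √(γπ)/(2σ))^d. -/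
open scoped ComplexOrder

/-- A function `K : X × X → ℂ` is a positive semidefinite kernel if every finite
quadratic form `∑ j, ∑ k, c j * conj (c k) * K (x j) (x k)` is a nonnegative real number. -/
def IsPSDKernel {X : Type*} (K : X → X → ℂ) : Prop :=
  ∀ (n : ℕ) (x : Fin n → X) (c : Fin n → ℂ),
    0 ≤ ∑ j, ∑ k, c j * (starRingEnd ℂ) (c k) * K (x j) (x k)

/-- The Gaussian kernel `G_γ(x,y) = exp(−‖x−y‖²/γ)` on `ℝ^d`. -/
noncomputable def gaussK (d : ℕ) (γ : ℝ) (x y : EuclideanSpace ℝ (Fin d)) : ℂ :=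
  ((Real.exp (-‖x - y‖ ^ 2 / γ) : ℝ) : ℂ)

/-- The `ℓ¹`-norm exponential kernel `E_σ(x,y) = exp(−‖x−y‖₁/σ)` on `ℝ^d`. -/
noncomputable def l1expK (d : ℕ) (σ : ℝ) (x y : EuclideanSpace ℝ (Fin d)) : ℂ :=
  ((Real.exp (-(∑ j, |x j - y j|) / σ) : ℝ) : ℂ)

/-!
Both kernels are characteristic functions evaluated at `x - y`: the Gaussian kernel comes from a
product of normal laws of variance `2 / γ`, the exponential kernel from a product of Cauchy laws of
scale `1 / σ`. The characteristic function of a finite measure is positive semidefinite, so an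
inequality of measures gives domination of kernels, and it suffices to bound the normal density by
a multiple of the Cauchy density in one dimension. In the other direction, the form of
`λG_γ - E_σ` at two points at distance `r` along an axis has the sign of
`λ(1 - exp (-r² / γ)) - (1 - exp (-r / σ))`, which is negative for small `r > 0` since the first
term is quadratic in `r` and the second linear.
-/

open MeasureTheory ProbabilityTheory FourierTransform BoundedContinuousFunction
open scoped NNReal Real RealInnerProductSpace ComplexConjugate

lemma IsPSDKernel.two_point_nonneg {X : Type*} {K : X → X → ℂ} (hK : IsPSDKernel K) (x y : X) :
    0 ≤ K x x - K x y - K y x + K y y := by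
  have h := hK 2 ![x, y] ![1, -1]
  simp only [Fin.sum_univ_two, Matrix.cons_val_zero, Matrix.cons_val_one, map_one, map_neg] at h
  convert h using 1
  ring

section CharFun

variable {E : Type*} [SeminormedAddCommGroup E] [InnerProductSpace ℝ E]

lemma innerProbChar_sub (s t w : E) :
    innerProbChar (s - t) w = innerProbChar s w * conj (innerProbChar t w) := by
  simp only [innerProbChar_apply, ← Complex.exp_conj, ← Complex.exp_add, inner_sub_right, map_mul,
    Complex.conj_ofReal, Complex.conj_I, Complex.ofReal_sub]
  ring_nf

variable [MeasurableSpace E] {μ ν : Measure E}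

lemma charFun_smul_measure (c : ℝ≥0) (t : E) : charFun (c • μ) t = c * charFun μ t := by
  rw [charFun_apply, charFun_apply, integral_smul_nnreal_measure]
  rfl

variable [OpensMeasurableSpace E]

theorem isPSDKernel_charFun (μ : Measure E) [IsFiniteMeasure μ] :
    IsPSDKernel fun x y => charFun μ (x - y) := by
  intro n x c
  have quadratic_form_eq_integral :
      ∑ j, ∑ k, c j * conj (c k) * charFun μ (x j - x k) =
        ∫ w, (∑ j, c j * innerProbChar (x j) w) * conj (∑ j, c j * innerProbChar (x j) w) ∂μ := by
    have hint (j k : Fin n) :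
        Integrable (fun w => c j * conj (c k) * innerProbChar (x j - x k) w) μ :=
      ((innerProbChar _).integrable μ).const_mul _
    simp only [charFun_eq_integral_innerProbChar, ← integral_const_mul]
    simp_rw [← integral_finsetSum _ fun k _ => hint _ k]
    rw [← integral_finsetSum _ fun j _ => integrable_finsetSum _ fun k _ => hint j k]
    refine integral_congr_ae (.of_forall fun w => ?_)
    simp only [map_sum, map_mul, Finset.sum_mul_sum, innerProbChar_sub, mul_mul_mul_comm]
  rw [quadratic_form_eq_integral]
  exact integral_nonneg fun w => mul_star_self_nonneg _

lemma charFun_sub_of_le [IsFiniteMeasure μ] [IsFiniteMeasure ν] (h : ν ≤ μ) (t : E) :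
    charFun (μ - ν) t = charFun μ t - charFun ν t := by
  rw [eq_sub_iff_add_eq]
  simp only [charFun_eq_integral_innerProbChar]
  rw [← integral_add_measure ((innerProbChar t).integrable _) ((innerProbChar t).integrable _),
    Measure.sub_add_cancel_of_le h]

theorem isPSDKernel_charFun_sub_charFun [IsFiniteMeasure μ] [IsFiniteMeasure ν] (h : ν ≤ μ) :
    IsPSDKernel fun x y => charFun μ (x - y) - charFun ν (x - y) := by
  simpa only [charFun_sub_of_le h] using isPSDKernel_charFun (μ - ν)

end CharFun

lemma measure_pi_mono {ι : Type*} [Fintype ι] {α : ι → Type*} [∀ i, MeasurableSpace (α i)]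
    {μ ν : ∀ i, Measure (α i)} (h : ∀ i, ν i ≤ μ i) : Measure.pi ν ≤ Measure.pi μ := by
  have outer_le : OuterMeasure.pi (fun i => (ν i).toOuterMeasure) ≤
      OuterMeasure.pi fun i => (μ i).toOuterMeasure :=
    OuterMeasure.le_pi.2 fun s _ =>
      (OuterMeasure.pi_pi_le _ s).trans (Finset.prod_le_prod' fun i _ => h i (s i))
  refine Measure.le_iff.2 fun s hs => ?_
  rw [Measure.pi, Measure.pi, toMeasure_apply _ _ hs, toMeasure_apply _ _ hs]
  exact outer_le s

theorem isPSDKernel_prod_charFun_sub_prod_charFun {ι : Type*} [Fintype ι] {E : ι → Type*}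
    [∀ i, NormedAddCommGroup (E i)] [∀ i, InnerProductSpace ℝ (E i)]
    [∀ i, MeasurableSpace (E i)] [∀ i, BorelSpace (E i)] [∀ i, SecondCountableTopology (E i)]
    {μ ν : ∀ i, Measure (E i)} [∀ i, IsFiniteMeasure (μ i)] [∀ i, IsFiniteMeasure (ν i)]
    (h : ∀ i, ν i ≤ μ i) :
    IsPSDKernel fun x y : PiLp 2 E =>
      ∏ i, charFun (μ i) (x i - y i) - ∏ i, charFun (ν i) (x i - y i) := by
  have := isPSDKernel_charFun_sub_charFun
    (Measure.map_mono (measure_pi_mono h) (WithLp.measurable_toLp 2 (∀ i, E i)))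
  simpa only [charFun_pi, PiLp.sub_apply] using this

section Laplace

variable (a : ℝ) (z : ℂ)

lemma eqOn_Iic_cexp_mul_sub_mul_abs :
    Set.EqOn (fun x : ℝ => Complex.exp ((z + a) * x))
      (fun x : ℝ => Complex.exp (z * x - a * |x|)) (Set.Iic 0) := by
  intro x hx
  simp only [abs_of_nonpos (Set.mem_Iic.1 hx), Complex.ofReal_neg]
  ring_nf

lemma eqOn_Ioi_cexp_mul_sub_mul_abs :
    Set.EqOn (fun x : ℝ => Complex.exp ((z - a) * x))
      (fun x : ℝ => Complex.exp (z * x - a * |x|)) (Set.Ioi 0) := by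
  intro x hx
  simp only [abs_of_pos (Set.mem_Ioi.1 hx)]
  ring_nf

variable {a z}

lemma integrableOn_Iic_cexp_mul_sub_mul_abs (h : -a < z.re) :
    IntegrableOn (fun x : ℝ => Complex.exp (z * x - a * |x|)) (Set.Iic 0) :=
  (integrableOn_exp_mul_complex_Iic (a := z + a) (by simpa using by linarith) 0).congr_fun
    (eqOn_Iic_cexp_mul_sub_mul_abs a z) measurableSet_Iic

lemma integrableOn_Ioi_cexp_mul_sub_mul_abs (h : z.re < a) :
    IntegrableOn (fun x : ℝ => Complex.exp (z * x - a * |x|)) (Set.Ioi 0) :=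
  (integrableOn_exp_mul_complex_Ioi (a := z - a) (by simpa using h) 0).congr_fun
    (eqOn_Ioi_cexp_mul_sub_mul_abs a z) measurableSet_Ioi

lemma integrable_cexp_mul_sub_mul_abs (h : |z.re| < a) :
    Integrable fun x : ℝ => Complex.exp (z * x - a * |x|) := by
  rw [← integrableOn_univ, ← Set.Iic_union_Ioi (a := (0 : ℝ))]
  exact (integrableOn_Iic_cexp_mul_sub_mul_abs (abs_lt.1 h).1).union
    (integrableOn_Ioi_cexp_mul_sub_mul_abs (abs_lt.1 h).2)

theorem integral_cexp_mul_sub_mul_abs (h : |z.re| < a) :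
    ∫ x : ℝ, Complex.exp (z * x - a * |x|) = 2 * a / (a ^ 2 - z ^ 2) := by
  obtain ⟨hl, hr⟩ := abs_lt.1 h
  have hadd : 0 < (z + a).re := by simpa using by linarith
  have hsub : (z - a).re < 0 := by simpa using hr
  have hadd0 : z + a ≠ 0 := fun h0 => by simp [h0] at hadd
  have hsub0 : z - a ≠ 0 := fun h0 => by simp [h0] at hsub
  have hfactor : (a : ℂ) ^ 2 - z ^ 2 = -((z + a) * (z - a)) := by ring
  rw [← intervalIntegral.integral_Iic_add_Ioi (integrableOn_Iic_cexp_mul_sub_mul_abs hl)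
      (integrableOn_Ioi_cexp_mul_sub_mul_abs hr),
    ← setIntegral_congr_fun measurableSet_Iic (eqOn_Iic_cexp_mul_sub_mul_abs a z),
    ← setIntegral_congr_fun measurableSet_Ioi (eqOn_Ioi_cexp_mul_sub_mul_abs a z),
    integral_exp_mul_complex_Iic hadd, integral_exp_mul_complex_Ioi hsub, hfactor]
  simp only [Complex.ofReal_zero, mul_zero, Complex.exp_zero]
  field_simp
  ring

end Laplace

theorem charFun_withDensity_ofReal {V : Type*} [NormedAddCommGroup V] [InnerProductSpace ℝ V]
    [FiniteDimensional ℝ V] [MeasurableSpace V] [BorelSpace V] {f : V → ℝ} (hf : Measurable f)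
    (hf_nonneg : ∀ x, 0 ≤ f x) (t : V) :
    charFun (volume.withDensity fun x => ENNReal.ofReal (f x)) t =
      𝓕⁻ (fun x => (f x : ℂ)) ((2 * π)⁻¹ • t) := by
  rw [charFun_apply, Real.fourierInv_eq', integral_withDensity_eq_integral_toReal_smul
    hf.ennreal_ofReal (.of_forall fun _ => ENNReal.ofReal_lt_top)]
  congr 1 with x
  rw [ENNReal.toReal_ofReal (hf_nonneg x), real_inner_smul_right,
    mul_inv_cancel_left₀ Real.two_pi_pos.ne', Complex.real_smul, smul_eq_mul, mul_comm]

lemma fourier_cexp_mul_sub_mul_abs (x₀ : ℝ) {s : ℝ≥0} (hs : s ≠ 0) :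
    𝓕 (fun t : ℝ => Complex.exp ((2 * π * x₀ * Complex.I) * t - (2 * π * s : ℝ) * |t|)) =
      fun w => (cauchyPDFReal x₀ s w : ℂ) := by
  ext w
  have hre : |(2 * π * (x₀ - w) * Complex.I : ℂ).re| < 2 * π * s := by
    simpa using by positivity
  calc
    _ = ∫ t : ℝ, Complex.exp ((2 * π * (x₀ - w) * Complex.I) * t - (2 * π * s : ℝ) * |t|) := by
      rw [Real.fourier_real_eq_integral_exp_smul]
      congr 1 with t
      rw [smul_eq_mul, ← Complex.exp_add]
      push_cast
      ring_nf
    _ = ((4 * π * s / ((2 * π) ^ 2 * ((w - x₀) ^ 2 + s ^ 2)) : ℝ) : ℂ) := by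
      rw [integral_cexp_mul_sub_mul_abs hre]
      push_cast
      congr 1
      · ring
      · linear_combination (-(2 * π * (x₀ - w)) ^ 2 : ℂ) * Complex.I_sq
    _ = cauchyPDFReal x₀ s w := by
      rw [cauchyPDFReal_def]
      congr 1
      field_simp
      ring

theorem charFun_cauchyMeasure (x₀ : ℝ) (s : ℝ≥0) (t : ℝ) :
    charFun (cauchyMeasure x₀ s) t = Complex.exp (t * x₀ * Complex.I - s * |t|) := by
  rcases eq_or_ne s 0 with rfl | hs
  · simp [charFun_dirac, mul_comm]
  have hfourier := fourier_cexp_mul_sub_mul_abs x₀ hs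
  have hintegrable := integrable_cexp_mul_sub_mul_abs
    (z := 2 * π * x₀ * Complex.I) (a := 2 * π * s) (by simpa using by positivity)
  have hinversion := Continuous.fourierInv_fourier_eq (by fun_prop) hintegrable
    (by rw [hfourier]; exact (integrable_cauchyPDFReal x₀).ofReal)
  calc
    charFun (cauchyMeasure x₀ s) t = 𝓕⁻ (fun w => (cauchyPDFReal x₀ s w : ℂ)) ((2 * π)⁻¹ • t) := by
      rw [cauchyMeasure_of_scale_ne_zero _ hs]
      exact charFun_withDensity_ofReal (measurable_cauchyPDFReal x₀ s)
        (fun w => (cauchyPDF_pos x₀ hs w).le) t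
    _ = Complex.exp (t * x₀ * Complex.I - s * |t|) := by
      rw [← hfourier, hinversion]
      simp only [smul_eq_mul, abs_mul, abs_inv, abs_of_pos Real.two_pi_pos]
      push_cast
      congr 2 <;> field_simp

lemma exp_neg_le_max_one_div {a u : ℝ} (ha : 0 ≤ a) (hu : 0 ≤ u) :
    Real.exp (-u) ≤ max 1 a / (1 + a * u) := by
  rw [le_div_iff₀ (by positivity)]
  calc
    Real.exp (-u) * (1 + a * u) ≤ Real.exp (-u) * (max 1 a * (u + 1)) := by
      rw [mul_add_one, add_comm]
      gcongr
      exacts [le_max_right _ _, le_max_left _ _]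
    _ ≤ Real.exp (-u) * (max 1 a * Real.exp u) := by
      gcongr
      exact Real.add_one_le_exp u
    _ = max 1 a := by
      rw [mul_left_comm, ← Real.exp_add, neg_add_cancel, Real.exp_zero, mul_one]

/-- A bound for the ratio of the density of a Gaussian law of variance `v` to that of a Cauchy law
of scale `s` with the same centre: the ratio at the centre, `s * √(π / (2 * v))`, times a factor
for the tails. -/
noncomputable def gaussianCauchyBound (v s : ℝ≥0) : ℝ≥0 :=
  max 1 (2 * v / s ^ 2) * (s * NNReal.sqrt (NNReal.pi / (2 * v)))

lemma gaussianPDFReal_le_mul_cauchyPDFReal (x₀ x : ℝ) {v s : ℝ≥0} (hv : v ≠ 0) (hs : s ≠ 0) :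
    gaussianPDFReal x₀ v x ≤ gaussianCauchyBound v s * cauchyPDFReal x₀ s x := by
  have hsqrt : (√(2 * π * v))⁻¹ = π⁻¹ * √(π / (2 * v)) := by
    rw [inv_eq_iff_eq_inv, mul_inv, inv_inv, ← Real.sqrt_inv, Real.sqrt_eq_iff_mul_self_eq
      (by positivity) (by positivity), mul_mul_mul_comm, Real.mul_self_sqrt (by positivity)]
    field_simp
  calc
    gaussianPDFReal x₀ v x = (√(2 * π * v))⁻¹ * Real.exp (-((x - x₀) ^ 2 / (2 * v))) := by
      rw [gaussianPDFReal, neg_div]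
    _ ≤ (√(2 * π * v))⁻¹ *
        (max 1 (2 * v / s ^ 2 : ℝ) / (1 + 2 * v / s ^ 2 * ((x - x₀) ^ 2 / (2 * v)))) := by
      gcongr
      exact exp_neg_le_max_one_div (by positivity) (by positivity)
    _ = gaussianCauchyBound v s * cauchyPDFReal x₀ s x := by
      rw [hsqrt, cauchyPDFReal_def', gaussianCauchyBound]
      push_cast [NNReal.coe_real_pi]
      field_simp

theorem gaussianReal_le_smul_cauchyMeasure (x₀ : ℝ) {v s : ℝ≥0} (hv : v ≠ 0) (hs : s ≠ 0) :
    gaussianReal x₀ v ≤ gaussianCauchyBound v s • cauchyMeasure x₀ s := by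
  rw [gaussianReal_of_var_ne_zero _ hv, cauchyMeasure_of_scale_ne_zero _ hs, ENNReal.smul_def,
    ← withDensity_smul _ (measurable_cauchyPDF x₀ s)]
  refine withDensity_mono (.of_forall fun x => ?_)
  rw [Pi.smul_apply, smul_eq_mul, cauchyPDF_def, gaussianPDF, ← ENNReal.ofReal_coe_nnreal,
    ← ENNReal.ofReal_mul NNReal.zero_le_coe]
  exact ENNReal.ofReal_le_ofReal (gaussianPDFReal_le_mul_cauchyPDFReal x₀ x hv hs)

lemma gaussK_eq_prod_charFun (d : ℕ) (γ : ℝ≥0) (x y : EuclideanSpace ℝ (Fin d)) :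
    gaussK d γ x y = ∏ i, charFun (gaussianReal 0 (2 / γ)) (x i - y i) := by
  simp only [gaussK, charFun_gaussianReal, ← Complex.exp_sum, Complex.ofReal_exp,
    EuclideanSpace.norm_sq_eq, Real.norm_eq_abs, sq_abs, PiLp.sub_apply]
  push_cast
  rw [neg_div, Finset.sum_div, ← Finset.sum_neg_distrib]
  congr! 2 with i
  ring

lemma l1expK_eq_prod_charFun (d : ℕ) (σ : ℝ≥0) (x y : EuclideanSpace ℝ (Fin d)) :
    l1expK d σ x y = ∏ i, charFun (cauchyMeasure 0 σ⁻¹) (x i - y i) := by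
  simp only [l1expK, charFun_cauchyMeasure, ← Complex.exp_sum, Complex.ofReal_exp]
  push_cast
  rw [neg_div, Finset.sum_div, ← Finset.sum_neg_distrib]
  congr! 2 with i
  ring

theorem isPSDKernel_mul_l1expK_sub_gaussK (d : ℕ) {γ σ : ℝ≥0} (hγ : γ ≠ 0) (hσ : σ ≠ 0) :
    IsPSDKernel fun x y : EuclideanSpace ℝ (Fin d) =>
      ((gaussianCauchyBound (2 / γ) σ⁻¹ ^ d : ℝ) : ℂ) * l1expK d σ x y - gaussK d γ x y := by
  have h := isPSDKernel_prod_charFun_sub_prod_charFun fun _ : Fin d =>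
    gaussianReal_le_smul_cauchyMeasure 0 (div_ne_zero two_ne_zero hγ) (inv_ne_zero hσ)
  simpa only [Complex.ofReal_pow, charFun_smul_measure, Finset.prod_mul_distrib, Finset.prod_const,
    Finset.card_univ, Fintype.card_fin, ← l1expK_eq_prod_charFun, ← gaussK_eq_prod_charFun] using h

lemma gaussianCauchyBound_two_div_inv (γ σ : ℝ≥0) :
    (gaussianCauchyBound (2 / γ) σ⁻¹ : ℝ) =
      max 1 (4 * σ ^ 2 / γ : ℝ) * (√(γ * π) / (2 * σ)) := by
  have hsqrt : √(π / (2 * (2 / γ))) = √(γ * π) / 2 := by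
    rw [show π / (2 * (2 / (γ : ℝ))) = γ * π / 2 ^ 2 by field_simp,
      Real.sqrt_div' _ (by positivity), Real.sqrt_sq zero_le_two]
  rw [gaussianCauchyBound]
  push_cast [NNReal.coe_real_pi]
  rw [hsqrt, show 2 * (2 / (γ : ℝ)) / (σ : ℝ)⁻¹ ^ 2 = 4 * σ ^ 2 / γ by
    field_simp
    ring]
  ring

lemma exists_pos_mul_one_sub_exp_sq_lt (c γ : ℝ) {σ : ℝ} (hσ : 0 < σ) :
    ∃ r > 0, c * (1 - Real.exp (-r ^ 2 / γ)) < 1 - Real.exp (-r / σ) := by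
  let f : ℝ → ℝ := fun r => 1 - Real.exp (-r / σ) - c * (1 - Real.exp (-r ^ 2 / γ))
  have hderiv : HasDerivAt f (1 / σ) 0 := by
    have hexp : HasDerivAt (fun r => Real.exp (-r / σ)) (-1 / σ) 0 := by
      simpa using ((hasDerivAt_id (0 : ℝ)).neg.div_const σ).exp
    have hgauss : HasDerivAt (fun r => Real.exp (-r ^ 2 / γ)) 0 0 := by
      simpa using ((hasDerivAt_pow 2 (0 : ℝ)).neg.div_const γ).exp
    exact ((hexp.const_sub 1).sub ((hgauss.const_sub 1).const_mul c)).congr_deriv (by ring)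
  have hsign := eventually_nhdsWithin_sign_eq_of_deriv_pos
    (hderiv.deriv ▸ one_div_pos.2 hσ) (by simp [f])
  obtain ⟨r, hr_sign, hr⟩ := ((hsign.filter_mono nhdsWithin_le_nhds).and
    (self_mem_nhdsWithin (a := (0 : ℝ)) (s := Set.Ioi 0))).exists
  rw [sub_zero, sign_pos hr, sign_eq_one_iff] at hr_sign
  exact ⟨r, hr, sub_pos.1 hr_sign⟩

section KernelValues

variable {d : ℕ} (γ σ : ℝ)

lemma gaussK_self (x : EuclideanSpace ℝ (Fin d)) : gaussK d γ x x = 1 := by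
  simp [gaussK]

lemma gaussK_comm (x y : EuclideanSpace ℝ (Fin d)) : gaussK d γ x y = gaussK d γ y x := by
  rw [gaussK, gaussK, norm_sub_rev]

lemma gaussK_single_zero (i : Fin d) (r : ℝ) :
    gaussK d γ (EuclideanSpace.single i r) 0 = Real.exp (-r ^ 2 / γ) := by
  simp [gaussK]

lemma l1expK_self (x : EuclideanSpace ℝ (Fin d)) : l1expK d σ x x = 1 := by
  simp [l1expK]

lemma l1expK_comm (x y : EuclideanSpace ℝ (Fin d)) : l1expK d σ x y = l1expK d σ y x := by
  simp only [l1expK, abs_sub_comm]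

lemma l1expK_single_zero (i : Fin d) (r : ℝ) :
    l1expK d σ (EuclideanSpace.single i r) 0 = Real.exp (-|r| / σ) := by
  simp [l1expK, apply_ite]

end KernelValues

theorem not_isPSDKernel_mul_gaussK_sub_l1expK {d : ℕ} (hd : 0 < d) (c γ : ℝ) {σ : ℝ} (hσ : 0 < σ) :
    ¬ IsPSDKernel fun x y : EuclideanSpace ℝ (Fin d) => c * gaussK d γ x y - l1expK d σ x y := by
  intro h
  obtain ⟨r, hr, hlt⟩ := exists_pos_mul_one_sub_exp_sq_lt c γ hσ
  have hnonneg : 0 ≤ 2 * (c * (1 - Real.exp (-r ^ 2 / γ)) - (1 - Real.exp (-r / σ))) := by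
    rw [← Complex.zero_le_real]
    convert h.two_point_nonneg 0 (EuclideanSpace.single ⟨0, hd⟩ r) using 1
    rw [gaussK_comm γ 0 (.single _ _), l1expK_comm σ 0 (.single _ _)]
    simp only [gaussK_self, l1expK_self, gaussK_single_zero, l1expK_single_zero, abs_of_pos hr]
    push_cast
    ring
  linarith

/-- (a) No `λ ≥ 0` makes `λG_γ − E_σ` positive semidefinite; (b) with
`λ = (max(1, 4σ²/γ)·√(γπ)/(2σ))^d`, `λE_σ − G_γ` is a positive semidefinite kernel. -/
theorem gaussian_l1exp_inclusion (d : ℕ) (hd : 0 < d) (γ σ : ℝ) (hγ : 0 < γ) (hσ : 0 < σ) :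
    (¬ ∃ lam : ℝ, 0 ≤ lam ∧
        IsPSDKernel (fun x y : EuclideanSpace ℝ (Fin d) =>
          (lam : ℂ) * gaussK d γ x y - l1expK d σ x y)) ∧
    IsPSDKernel (fun x y : EuclideanSpace ℝ (Fin d) =>
      (((max 1 (4 * σ ^ 2 / γ) * (Real.sqrt (γ * Real.pi) / (2 * σ))) ^ d : ℝ) : ℂ) *
          l1expK d σ x y - gaussK d γ x y) := by
  refine ⟨fun ⟨lam, _, h⟩ => not_isPSDKernel_mul_gaussK_sub_l1expK hd lam γ hσ h, ?_⟩
  lift γ to ℝ≥0 using hγ.le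
  lift σ to ℝ≥0 using hσ.le
  rw [← gaussianCauchyBound_two_div_inv]
  exact isPSDKernel_mul_l1expK_sub_gaussK d (NNReal.coe_ne_zero.1 hγ.ne')
    (NNReal.coe_ne_zero.1 hσ.ne')
end

section
/- Let G_γ(x,y) = exp(−‖x−y‖²/γ) be the Gaussian kernel on ℝ^d with parameter γ > 0, and let M_β(x,y) = (1 + ‖x−y‖²)^{−β} be the inverse multiquadric kernel with parameter β > 0, where ‖·‖ is the Euclidean norm. Then: (a) for every d ∈ ℕ and γ, β > 0, there is no λ ≥ 0 for which λG_γ − M_β is a positive semidefinite kernel on ℝ^d; (b) for every d ∈ ℕ and γ, β > 0, there exists λ ≥ 0 for which λM_β − G_γ is a positive semidefinite kernel on ℝ^d; (c) for fixed γ, β > 0 there is no single constant λ ≥ 0 such that λM_β − G_γ is a positive semidefinite kernel on ℝ^d for every dimension d ∈ ℕ. -/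
open scoped ComplexOrder

/-- The inverse multiquadric kernel `M_β(x,y) = (1 + ‖x−y‖²)^{−β}` on `ℝ^d`. -/
noncomputable def invMultiquadricK (d : ℕ) (β : ℝ) (x y : EuclideanSpace ℝ (Fin d)) : ℂ :=
  (((1 + ‖x - y‖ ^ 2) ^ (-β) : ℝ) : ℂ)

/-!
If `F(x - y)` is positive semidefinite on `ℝ` and `F` is holomorphic along `ℝ`, its second
differences show that so is `-F''(x - y)`. Hence `(-1) ^ n F^(2n)(0) ≥ 0` for all `n`, and the
Taylor series of `F` at `0` gives `F(iy) + F(-iy) ≥ 0` inside the disc of convergence. For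
`F(z) = λ exp(-z² / γ) - (1 + z²) ^ (-β)` this fails as `y → 1`, because of the singularity at `i`.

The multiquadric is a mixture of Gaussians: `(1 + r²) ^ (-β) = ∫ exp(-r² s) dμ(s)` with `μ` the
gamma distribution of shape `β`. On `ℝ^d` a bounded range of parameters `s ≥ s₀ = 1 / γ` already
dominates a multiple of `exp(-r² s₀)`, as comparing spectral densities shows.

If one `λ` served all dimensions, averaging over many orthogonal directions (Schoenberg) would turn
`‖x - y‖²` into `u + v` with `u, v ≥ 0`, so that `q(s₀)² ≤ λ ∫ q² dμ` for every polynomial `q` in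
`exp(-η s)`. Powers of such a polynomial that peaks exactly at `s₀` make the right-hand side
tend to `0`, since `μ` has no atom at `s₀`.
-/

open Filter MeasureTheory ProbabilityTheory Set
open scoped ComplexConjugate Polynomial Topology

section PSDKernel

variable {X ι : Type*} {K : X → X → ℂ}

lemma IsPSDKernel.diag_nonneg (hK : IsPSDKernel K) (x : X) : 0 ≤ K x x := by
  simpa using hK 1 (fun _ => x) 1

lemma IsPSDKernel.sum_nonneg (hK : IsPSDKernel K) (s : Finset ι) (x : ι → X) (c : ι → ℂ) :
    0 ≤ ∑ j ∈ s, ∑ k ∈ s, c j * conj (c k) * K (x j) (x k) := by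
  simpa only [← s.sum_coe_sort, ← s.equivFin.symm.sum_comp] using
    hK s.card (fun j => x (s.equivFin.symm j)) (fun j => c (s.equivFin.symm j))

lemma IsPSDKernel.comp {Y : Type*} (hK : IsPSDKernel K) (f : Y → X) :
    IsPSDKernel fun x y => K (f x) (f y) :=
  fun n x c => hK n (f ∘ x) c

lemma IsPSDKernel.sum_sum {Y : Type*} [Fintype ι] (hK : IsPSDKernel K) (f : Y → ι → X) :
    IsPSDKernel fun x y => ∑ i, ∑ j, K (f x i) (f y j) := by
  intro n x c
  have h := hK.sum_nonneg Finset.univ (fun p : Fin n × ι => f (x p.1) p.2) (fun p => c p.1)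
  simp only [Fintype.sum_prod_type] at h
  convert h using 2 with j
  simp only [Finset.mul_sum]
  rw [Finset.sum_comm]

lemma IsPSDKernel.const_mul (hK : IsPSDKernel K) {a : ℂ} (ha : 0 ≤ a) :
    IsPSDKernel fun x y => a * K x y := by
  intro n x c
  simpa only [Finset.mul_sum, mul_left_comm a] using mul_nonneg ha (hK n x c)

lemma IsPSDKernel.of_tendsto {l : Filter ι} [l.NeBot] {L : ι → X → X → ℂ}
    (hL : ∀ᶠ i in l, IsPSDKernel (L i)) (h : ∀ x y, Tendsto (L · x y) l (𝓝 (K x y))) :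
    IsPSDKernel K := fun n x c =>
  ge_of_tendsto
    (tendsto_finsetSum _ fun _ _ => tendsto_finsetSum _ fun _ _ => (h _ _).const_mul _)
    (hL.mono fun _ hi => hi n x c)

lemma IsPSDKernel.integral {S : Type*} [MeasurableSpace S] {μ : Measure S} {L : S → X → X → ℂ}
    (hL : ∀ᵐ s ∂μ, IsPSDKernel (L s)) (hint : ∀ x y, Integrable (L · x y) μ) :
    IsPSDKernel fun x y => ∫ s, L s x y ∂μ := by
  intro n x c
  have hterm (j k : Fin n) :
      Integrable (fun s => c j * conj (c k) * L s (x j) (x k)) μ := (hint _ _).const_mul _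
  have hswap : ∫ s, ∑ j, ∑ k, c j * conj (c k) * L s (x j) (x k) ∂μ =
      ∑ j, ∑ k, c j * conj (c k) * ∫ s, L s (x j) (x k) ∂μ := by
    rw [integral_finsetSum _ fun j _ => integrable_finsetSum _ fun k _ => hterm j k]
    simp only [integral_finsetSum _ fun k _ => hterm _ k, integral_const_mul]
  rw [← hswap]
  exact integral_nonneg_of_ae (hL.mono fun s hs => hs n x c)

lemma IsPSDKernel.integral_sub_measureReal_mul {S : Type*} [MeasurableSpace S] {μ : Measure S}
    [IsFiniteMeasure μ] {L : S → X → X → ℂ} {A : Set S} (hA : MeasurableSet A)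
    (hL : ∀ᵐ s ∂μ, IsPSDKernel (L s)) (hLA : ∀ s ∈ A, IsPSDKernel fun x y => L s x y - K x y)
    (hint : ∀ x y, Integrable (L · x y) μ) :
    IsPSDKernel fun x y => ∫ s, L s x y ∂μ - μ.real A * K x y := by
  have hind (x y : X) : Integrable (A.indicator fun _ => K x y) μ :=
    (integrable_const _).indicator hA
  have hpsd : ∀ᵐ s ∂μ, IsPSDKernel fun x y => L s x y - A.indicator (fun _ => K x y) s := by
    filter_upwards [hL] with s hs
    by_cases hsA : s ∈ A
    · simpa only [indicator_of_mem hsA] using hLA s hsA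
    · simpa only [indicator_of_notMem hsA, sub_zero] using hs
  simpa only [integral_sub (hint _ _) (hind _ _), integral_indicator_const _ hA,
    Complex.real_smul] using IsPSDKernel.integral hpsd fun x y => (hint x y).sub (hind x y)

lemma isPSDKernel_mul_conj (f : X → ℂ) : IsPSDKernel fun x y => f x * conj (f y) := by
  intro n x c
  have hsq : ∑ j, ∑ k, c j * conj (c k) * (f (x j) * conj (f (x k))) =
      (∑ j, c j * f (x j)) * conj (∑ j, c j * f (x j)) := by
    simp only [map_sum, map_mul, Finset.sum_mul_sum, mul_mul_mul_comm]
  rw [hsq, Complex.mul_conj]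
  exact_mod_cast Complex.normSq_nonneg _

lemma IsPSDKernel.second_difference {G : Type*} [AddCommGroup G] {f : G → ℂ}
    (hf : IsPSDKernel fun x y => f (x - y)) (a : G) :
    IsPSDKernel fun x y => 2 * f (x - y) - f (x - y + a) - f (x - y - a) := by
  intro n x c
  have h := hf.sum_nonneg Finset.univ (Sum.elim x fun j => x j + a) (Sum.elim c fun j => -c j)
  convert h using 1
  simp only [Fintype.sum_sum_type, Sum.elim_inl, Sum.elim_inr, ← Finset.sum_add_distrib,
    add_sub_add_right_eq_sub, map_neg]
  refine Finset.sum_congr rfl fun j _ => Finset.sum_congr rfl fun k _ => ?_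
  rw [add_sub_right_comm (x j) a, sub_add_eq_sub_sub]
  ring

end PSDKernel

section Holomorphic

lemma tendsto_second_difference_div_sq {𝕜 : Type*} [NontriviallyNormedField 𝕜] [CompleteSpace 𝕜]
    [CharZero 𝕜] {F : 𝕜 → 𝕜} {z : 𝕜} (hF : AnalyticAt 𝕜 F z) :
    Tendsto (fun h => (2 * F z - F (z + h) - F (z - h)) / h ^ 2) (𝓝[≠] 0)
      (𝓝 (-deriv (deriv F) z)) := by
  have hplus := hF.hasFPowerSeriesAt.isBigO_sub_partialSum_pow 3
  have hminus := hplus.comp_tendsto (continuous_neg.tendsto' (0 : 𝕜) 0 neg_zero)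
  have hsum : (fun h => 2 * F z - F (z + h) - F (z - h) + deriv (deriv F) z * h ^ 2)
      =o[𝓝 0] fun h => h ^ 2 := by
    refine ((hplus.add (hminus.congr_right fun h => by simp)).neg_left.congr_left fun h => ?_)
      |>.trans_isLittleO ?_
    · simp only [FormalMultilinearSeries.partialSum,
        FormalMultilinearSeries.apply_eq_prod_smul_coeff, FormalMultilinearSeries.coeff_ofScalars,
        Finset.prod_const, Finset.card_univ, Fintype.card_fin, Finset.sum_range_succ,
        Finset.range_one, Finset.sum_singleton, Nat.factorial_zero, Nat.factorial_one,
        Nat.factorial_two, Nat.cast_one, Nat.cast_ofNat, iteratedDeriv_succ, iteratedDeriv_zero,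
        Function.comp_apply, smul_eq_mul, sub_eq_add_neg]
      ring
    · simpa only [norm_pow] using
        (Asymptotics.isLittleO_pow_pow (𝕜 := 𝕜) (by decide : 2 < 3)).norm_left
  have hlim := (hsum.tendsto_div_nhds_zero.mono_left (nhdsWithin_le_nhds (s := {0}ᶜ))).sub_const
    (deriv (deriv F) z)
  rw [zero_sub] at hlim
  refine hlim.congr' ?_
  filter_upwards [self_mem_nhdsWithin] with h (hh : h ≠ 0)
  field_simp
  ring

variable {F : ℂ → ℂ}

lemma IsPSDKernel.neg_deriv_deriv (hF : ∀ x : ℝ, AnalyticAt ℂ F x)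
    (hK : IsPSDKernel fun x y : ℝ => F (x - y)) :
    IsPSDKernel fun x y : ℝ => -deriv (deriv F) (x - y) := by
  refine .of_tendsto (l := 𝓝[≠] (0 : ℝ))
    (L := fun h x y => (h ^ 2 : ℂ)⁻¹ * (2 * F (x - y) - F (x - y + h) - F (x - y - h)))
    (.of_forall fun h => ?_) fun x y => ?_
  · have hreal : IsPSDKernel fun x y : ℝ => F ((x - y : ℝ)) := by
      simpa only [Complex.ofReal_sub] using hK
    have hpos : (0 : ℂ) ≤ (h ^ 2 : ℂ)⁻¹ := by
      exact_mod_cast (inv_nonneg.2 (sq_nonneg h))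
    have := (IsPSDKernel.second_difference (f := fun x : ℝ => F x) hreal h).const_mul hpos
    simpa only [Complex.ofReal_sub, Complex.ofReal_add] using this
  · have hlim : Tendsto ((↑) : ℝ → ℂ) (𝓝[≠] 0) (𝓝[≠] 0) :=
      (Complex.continuous_ofReal.tendsto' 0 0 rfl).inf (by simp)
    have := (tendsto_second_difference_div_sq (hF (x - y))).comp hlim
    simpa [Function.comp_def, div_eq_inv_mul] using this

lemma IsPSDKernel.neg_one_pow_mul_iteratedDeriv (hF : ∀ x : ℝ, AnalyticAt ℂ F x)
    (hK : IsPSDKernel fun x y : ℝ => F (x - y)) (n : ℕ) :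
    IsPSDKernel fun x y : ℝ => (-1) ^ n * iteratedDeriv (2 * n) F (x - y) := by
  induction n generalizing F with
  | zero => simpa using hK
  | succ n ih =>
    simpa [pow_succ, mul_add, iteratedDeriv_succ'] using
      ih (fun x => (hF x).deriv.deriv.neg) (hK.neg_deriv_deriv hF)

lemma IsPSDKernel.add_neg_mul_I_nonneg (hF : ∀ x : ℝ, AnalyticAt ℂ F x)
    (hK : IsPSDKernel fun x y : ℝ => F (x - y)) {r : ℝ}
    (hball : DifferentiableOn ℂ F (Metric.ball 0 r)) {y : ℝ} (hy : |y| < r) :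
    0 ≤ F (y * Complex.I) + F (-(y * Complex.I)) := by
  have hmem : (y * Complex.I : ℂ) ∈ Metric.ball 0 r := by simpa using hy
  have hmem' : (-(y * Complex.I) : ℂ) ∈ Metric.ball 0 r := by simpa using hy
  refine HasSum.nonneg (fun n => ?_) ((Complex.hasSum_taylorSeries_on_ball hball hmem).add
    (Complex.hasSum_taylorSeries_on_ball hball hmem'))
  rw [sub_zero, sub_zero]
  obtain ⟨m, rfl | rfl⟩ := n.even_or_odd'
  · have hcoeff := (hK.neg_one_pow_mul_iteratedDeriv hF m).diag_nonneg 0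
    have h := mul_nonneg (Complex.zero_le_real.2
      (by positivity : 0 ≤ 2 * ((2 * m).factorial : ℝ)⁻¹ * (y ^ 2) ^ m)) hcoeff
    convert h using 1
    simp only [pow_mul, mul_pow, Complex.I_sq, even_two.neg_pow, smul_eq_mul, Complex.ofReal_mul,
      Complex.ofReal_inv, Complex.ofReal_pow, Complex.ofReal_natCast, Complex.ofReal_ofNat,
      Complex.ofReal_zero, sub_self]
    ring
  · simp [(odd_two_mul_add_one m).neg_pow]

end Holomorphic

section GaussDomination

/-- The profile of the kernel `λ G_γ - M_β` as a function of `x - y`, extended to complex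
arguments in order to reach the singularity of `M_β` at `i`; the power takes its principal value,
so the extension is holomorphic where `1 + z ^ 2` avoids the negative half-line. -/
noncomputable def gaussSubInvMultiquadric (lam γ β : ℝ) (z : ℂ) : ℂ :=
  lam * Complex.exp (-z ^ 2 / γ) - (1 + z ^ 2) ^ (-β : ℂ)

variable {lam γ β : ℝ}

lemma analyticAt_gaussSubInvMultiquadric {z : ℂ} (hz : 1 + z ^ 2 ∈ Complex.slitPlane) :
    AnalyticAt ℂ (gaussSubInvMultiquadric lam γ β) z := by
  unfold gaussSubInvMultiquadric
  fun_prop (disch := assumption)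

lemma gaussSubInvMultiquadric_ofReal (x : ℝ) : gaussSubInvMultiquadric lam γ β x =
    lam * (Real.exp (-x ^ 2 / γ) : ℝ) - ((1 + x ^ 2) ^ (-β) : ℝ) := by
  rw [gaussSubInvMultiquadric, Complex.ofReal_cpow (by positivity)]
  push_cast
  rfl

lemma gaussSubInvMultiquadric_neg (z : ℂ) :
    gaussSubInvMultiquadric lam γ β (-z) = gaussSubInvMultiquadric lam γ β z := by
  simp only [gaussSubInvMultiquadric, neg_sq]

lemma gaussSubInvMultiquadric_mul_I {y : ℝ} (hy : y ^ 2 ≤ 1) :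
    gaussSubInvMultiquadric lam γ β (y * Complex.I) =
      (lam * Real.exp (y ^ 2 / γ) - (1 - y ^ 2) ^ (-β) : ℝ) := by
  rw [gaussSubInvMultiquadric, mul_pow, Complex.I_sq, Complex.ofReal_sub,
    Complex.ofReal_cpow (sub_nonneg.2 hy)]
  push_cast
  ring_nf

lemma rpow_neg_le_of_isPSDKernel
    (h : IsPSDKernel fun x y : ℝ => gaussSubInvMultiquadric lam γ β (x - y)) {y : ℝ}
    (hy : |y| < 1) : (1 - y ^ 2) ^ (-β) ≤ lam * Real.exp (y ^ 2 / γ) := by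
  have hreal (x : ℝ) : AnalyticAt ℂ (gaussSubInvMultiquadric lam γ β) x :=
    analyticAt_gaussSubInvMultiquadric (.inl (by norm_cast; positivity))
  have hball : DifferentiableOn ℂ (gaussSubInvMultiquadric lam γ β) (Metric.ball 0 1) := by
    intro z hz
    refine (analyticAt_gaussSubInvMultiquadric ?_).differentiableAt.differentiableWithinAt
    have : ‖z‖ < 1 := by simpa using hz
    exact Complex.mem_slitPlane_of_norm_lt_one (by simpa using this)
  have hnonneg := h.add_neg_mul_I_nonneg hreal hball hy
  rw [gaussSubInvMultiquadric_neg,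
    gaussSubInvMultiquadric_mul_I ((sq_lt_one_iff_abs_lt_one y).2 hy).le,
    ← Complex.ofReal_add, Complex.zero_le_real] at hnonneg
  linarith

lemma not_isPSDKernel_gaussSubInvMultiquadric (hβ : 0 < β) :
    ¬ IsPSDKernel fun x y : ℝ => gaussSubInvMultiquadric lam γ β (x - y) := by
  intro h
  have hlower : Tendsto (fun t : ℝ => t ^ (-β)) (𝓝[>] 0) atTop :=
    tendsto_rpow_neg_nhdsGT_zero (neg_neg_of_pos hβ)
  have hupper : Tendsto (fun t : ℝ => lam * Real.exp ((1 - t) / γ)) (𝓝[>] 0)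
      (𝓝 (lam * Real.exp ((1 - 0) / γ))) :=
    (Continuous.tendsto (by fun_prop) 0).mono_left nhdsWithin_le_nhds
  refine not_tendsto_nhds_of_tendsto_atTop (tendsto_atTop_mono' _ ?_ hlower) _ hupper
  filter_upwards [Ioo_mem_nhdsGT one_pos] with t ht
  have hsq : √(1 - t) ^ 2 = 1 - t := Real.sq_sqrt (by linarith [ht.2])
  have hlt : |√(1 - t)| < 1 := (sq_lt_one_iff_abs_lt_one _).1 (by linarith [ht.1])
  simpa [hsq] using rpow_neg_le_of_isPSDKernel h hlt

lemma not_isPSDKernel_gaussK_sub_invMultiquadricK {d : ℕ} (hd : 0 < d) (hβ : 0 < β) :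
    ¬ IsPSDKernel fun x y : EuclideanSpace ℝ (Fin d) =>
      (lam : ℂ) * gaussK d γ x y - invMultiquadricK d β x y := by
  intro h
  apply not_isPSDKernel_gaussSubInvMultiquadric (lam := lam) (γ := γ) hβ
  convert h.comp (EuclideanSpace.single (⟨0, hd⟩ : Fin d)) using 3 with x y
  rw [← Complex.ofReal_sub, gaussSubInvMultiquadric_ofReal, gaussK, invMultiquadricK,
    ← PiLp.single_sub, PiLp.norm_single, Real.norm_eq_abs, sq_abs]

end GaussDomination

section GammaMixture

lemma integral_gammaPDFReal {a r : ℝ} (ha : 0 < a) (hr : 0 < r) :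
    ∫ s, gammaPDFReal a r s = 1 := by
  rw [integral_eq_lintegral_of_nonneg_ae (.of_forall (gammaPDFReal_nonneg ha hr)) (by fun_prop)]
  exact congrArg ENNReal.toReal (lintegral_gammaPDF_eq_one ha hr)

lemma integral_gammaMeasure {a r : ℝ} (ha : 0 < a) (hr : 0 < r) {E : Type*}
    [NormedAddCommGroup E] [NormedSpace ℝ E] (f : ℝ → E) :
    ∫ s, f s ∂gammaMeasure a r = ∫ s, gammaPDFReal a r s • f s := by
  rw [gammaMeasure, integral_withDensity_eq_integral_toReal_smul (f := gammaPDF a r)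
    (measurable_gammaPDFReal a r).ennreal_ofReal (.of_forall fun _ => ENNReal.ofReal_lt_top)]
  simp only [gammaPDF, ENNReal.toReal_ofReal (gammaPDFReal_nonneg ha hr _)]

lemma integral_exp_neg_mul_gammaMeasure {a r u : ℝ} (ha : 0 < a) (hr : 0 < r) (hu : 0 < r + u) :
    ∫ s, Real.exp (-(u * s)) ∂gammaMeasure a r = (r / (r + u)) ^ a := by
  have htilt (s : ℝ) : gammaPDFReal a r s * Real.exp (-(u * s)) =
      (r / (r + u)) ^ a * gammaPDFReal a (r + u) s := by
    unfold gammaPDFReal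
    split_ifs
    · rw [add_mul, neg_add, Real.exp_add, Real.div_rpow hr.le hu.le]
      field_simp
    · simp
  rw [integral_gammaMeasure ha hr]
  simp only [smul_eq_mul, htilt, integral_const_mul, integral_gammaPDFReal ha hu, mul_one]

lemma one_add_rpow_neg_eq_integral_gammaMeasure {β u : ℝ} (hβ : 0 < β) (hu : 0 ≤ u) :
    (1 + u) ^ (-β) = ∫ s, Real.exp (-(u * s)) ∂gammaMeasure β 1 := by
  rw [integral_exp_neg_mul_gammaMeasure hβ one_pos (by positivity), one_div,
    Real.inv_rpow (by positivity), Real.rpow_neg (by positivity)]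

lemma gammaMeasure_singleton (a r s : ℝ) : gammaMeasure a r {s} = 0 :=
  withDensity_absolutelyContinuous _ _ (measure_singleton s)

lemma ae_pos_gammaMeasure (a r : ℝ) : ∀ᵐ s ∂gammaMeasure a r, 0 < s := by
  have hIic : gammaMeasure a r (Iic 0) = 0 := by
    rw [gammaMeasure, withDensity_apply _ measurableSet_Iic, setLIntegral_congr Iio_ae_eq_Iic.symm]
    exact lintegral_gammaPDF_of_nonpos le_rfl
  simpa [ae_iff, Iic] using hIic

lemma gammaMeasure_Ioo_ne_zero {a r : ℝ} (ha : 0 < a) (hr : 0 < r) {x y : ℝ} (hx : 0 ≤ x)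
    (hxy : x < y) : gammaMeasure a r (Ioo x y) ≠ 0 := by
  have hsub : Ioo x y ⊆ {s | gammaPDF a r s ≠ 0} := fun s hs =>
    (ENNReal.ofReal_pos.2 (gammaPDFReal_pos ha hr (hx.trans_lt hs.1))).ne'
  rw [gammaMeasure, Ne, withDensity_apply_eq_zero (f := gammaPDF a r)
    (measurable_gammaPDFReal a r).ennreal_ofReal,
    inter_eq_self_of_subset_right hsub, Real.volume_Ioo]
  simpa using hxy

lemma integrable_exp_neg_mul {μ : Measure ℝ} [IsFiniteMeasure μ] (hμ : ∀ᵐ s ∂μ, 0 < s)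
    {u : ℝ} (hu : 0 ≤ u) : Integrable (fun s => Real.exp (-(u * s))) μ := by
  refine .of_bound (by fun_prop) 1 (hμ.mono fun s hs => ?_)
  rw [Real.norm_eq_abs, Real.abs_exp, Real.exp_le_one_iff]
  nlinarith

end GammaMixture

section GaussianMixture

variable {E : Type*} [NormedAddCommGroup E] [InnerProductSpace ℝ E]

lemma isPSDKernel_exp_I_mul_inner_sub (v : E) :
    IsPSDKernel fun x y : E => Complex.exp (Complex.I * (inner ℝ (x - y) v : ℝ)) := by
  convert isPSDKernel_mul_conj fun x : E => Complex.exp (Complex.I * (inner ℝ x v : ℝ)) using 3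
  rw [← Complex.exp_conj, ← Complex.exp_add, inner_sub_left, map_mul, Complex.conj_I,
    Complex.conj_ofReal, Complex.ofReal_sub, mul_sub, neg_mul, sub_eq_add_neg]

lemma isPSDKernel_integral_mul_exp_I_mul_inner [MeasurableSpace E] {μ : Measure E} {ρ : E → ℝ}
    (hρ : ∀ v, 0 ≤ ρ v)
    (hint : ∀ w, Integrable (fun v => ρ v * Complex.exp (Complex.I * (inner ℝ w v : ℝ))) μ) :
    IsPSDKernel fun x y : E =>
      ∫ v, ρ v * Complex.exp (Complex.I * (inner ℝ (x - y) v : ℝ)) ∂μ :=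
  .integral (.of_forall fun v =>
    (isPSDKernel_exp_I_mul_inner_sub v).const_mul (Complex.zero_le_real.2 (hρ v))) fun _ _ => hint _

/-- The spectral density of the Gaussian `exp (-s ‖w‖ ^ 2)` on the Euclidean space `E`: the
centred normal density of variance `2 s` in every direction, whose Fourier transform, taken with
the character `exp (i ⟪w, v⟫)`, is that Gaussian. -/
noncomputable def gaussianSpectralDensity (s : ℝ) (v : E) : ℝ :=
  (4 * Real.pi * s) ^ (-(Module.finrank ℝ E / 2 : ℝ)) * Real.exp (-‖v‖ ^ 2 / (4 * s))

lemma gaussianSpectralDensity_nonneg {s : ℝ} (hs : 0 ≤ s) (v : E) :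
    0 ≤ gaussianSpectralDensity s v := by
  unfold gaussianSpectralDensity
  positivity

lemma mul_gaussianSpectralDensity_le {s₀ s : ℝ} (hs₀ : 0 < s₀) (h : s₀ ≤ s) (v : E) :
    (s₀ / s) ^ (Module.finrank ℝ E / 2 : ℝ) * gaussianSpectralDensity s₀ v ≤
      gaussianSpectralDensity s v := by
  have hs : 0 < s := hs₀.trans_le h
  have hnorm : (s₀ / s) ^ (Module.finrank ℝ E / 2 : ℝ) *
      (4 * Real.pi * s₀) ^ (-(Module.finrank ℝ E / 2 : ℝ)) =
        (4 * Real.pi * s) ^ (-(Module.finrank ℝ E / 2 : ℝ)) := by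
    rw [Real.rpow_neg (by positivity), Real.rpow_neg (by positivity), ← div_eq_mul_inv,
      ← Real.div_rpow (by positivity) (by positivity), ← Real.inv_rpow (by positivity)]
    congr 1
    field_simp
  rw [gaussianSpectralDensity, ← mul_assoc, hnorm, gaussianSpectralDensity, neg_div, neg_div]
  gcongr

lemma gaussianSpectralDensity_mul_exp_I_mul_inner (s : ℝ) (w v : E) :
    gaussianSpectralDensity s v * Complex.exp (Complex.I * (inner ℝ w v : ℝ)) =
      ((4 * Real.pi * s) ^ (-(Module.finrank ℝ E / 2 : ℝ)) : ℝ) *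
        Complex.exp (-((1 / (4 * s) : ℝ) : ℂ) * ‖v‖ ^ 2 + Complex.I * (inner ℝ w v : ℝ)) := by
  rw [gaussianSpectralDensity, Complex.exp_add, Complex.ofReal_mul, mul_assoc]
  push_cast
  ring_nf

variable [FiniteDimensional ℝ E] [MeasurableSpace E] [BorelSpace E]

lemma integrable_gaussianSpectralDensity_mul_exp {s : ℝ} (hs : 0 < s) (w : E) :
    Integrable fun v => gaussianSpectralDensity s v *
      Complex.exp (Complex.I * (inner ℝ w v : ℝ)) := by
  have hb : 0 < ((1 / (4 * s) : ℝ) : ℂ).re := by rw [Complex.ofReal_re]; positivity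
  simp only [gaussianSpectralDensity_mul_exp_I_mul_inner]
  exact (GaussianFourier.integrable_cexp_neg_mul_sq_norm_add hb Complex.I w).const_mul _

lemma integral_gaussianSpectralDensity_mul_exp {s : ℝ} (hs : 0 < s) (w : E) :
    ∫ v, gaussianSpectralDensity s v * Complex.exp (Complex.I * (inner ℝ w v : ℝ)) =
      (Real.exp (-(‖w‖ ^ 2 * s)) : ℝ) := by
  have hb : 0 < ((1 / (4 * s) : ℝ) : ℂ).re := by rw [Complex.ofReal_re]; positivity
  have hbase : (Real.pi / (1 / (4 * s) : ℝ) : ℂ) = (4 * Real.pi * s : ℝ) := by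
    push_cast
    field_simp
  have hexp : Complex.I ^ 2 * ‖w‖ ^ 2 / (4 * (1 / (4 * s) : ℝ)) = (-(‖w‖ ^ 2 * s) : ℝ) := by
    rw [Complex.I_sq]
    push_cast
    field_simp
  have hpow : (Module.finrank ℝ E / 2 : ℂ) = (Module.finrank ℝ E / 2 : ℝ) := by push_cast; rfl
  simp only [gaussianSpectralDensity_mul_exp_I_mul_inner]
  rw [integral_const_mul, GaussianFourier.integral_cexp_neg_mul_sq_norm_add hb, hbase, hexp, hpow,
    ← Complex.ofReal_cpow (by positivity), ← mul_assoc, ← Complex.ofReal_mul,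
    ← Real.rpow_add (by positivity), neg_add_cancel, Real.rpow_zero, Complex.ofReal_one, one_mul,
    Complex.ofReal_exp]

lemma isPSDKernel_exp_neg_sq_norm_sub_mul {s : ℝ} (hs : 0 < s) :
    IsPSDKernel fun x y : E => (Real.exp (-(‖x - y‖ ^ 2 * s)) : ℂ) := by
  simpa only [integral_gaussianSpectralDensity_mul_exp hs] using
    isPSDKernel_integral_mul_exp_I_mul_inner (gaussianSpectralDensity_nonneg hs.le)
      (integrable_gaussianSpectralDensity_mul_exp (E := E) hs)

lemma isPSDKernel_gaussian_sub_gaussian {s₀ s θ : ℝ} (hs₀ : 0 < s₀) (h : s₀ ≤ s)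
    (hθ : θ ≤ (s₀ / s) ^ (Module.finrank ℝ E / 2 : ℝ)) :
    IsPSDKernel fun x y : E => (Real.exp (-(‖x - y‖ ^ 2 * s)) : ℂ) -
      θ * Real.exp (-(‖x - y‖ ^ 2 * s₀)) := by
  have hint := integrable_gaussianSpectralDensity_mul_exp (E := E) (hs₀.trans_le h)
  have hint₀ (w : E) := (integrable_gaussianSpectralDensity_mul_exp hs₀ w).const_mul (θ : ℂ)
  have hle (v : E) : θ * gaussianSpectralDensity s₀ v ≤ gaussianSpectralDensity s v :=
    (mul_le_mul_of_nonneg_right hθ (gaussianSpectralDensity_nonneg hs₀.le v)).trans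
      (mul_gaussianSpectralDensity_le hs₀ h v)
  have hpsd := isPSDKernel_integral_mul_exp_I_mul_inner (μ := volume)
    (fun v => sub_nonneg.2 (hle v)) fun w => by
      simpa only [Complex.ofReal_sub, Complex.ofReal_mul, sub_mul, mul_assoc, Pi.sub_def] using
        (hint w).sub (hint₀ w)
  simpa only [Complex.ofReal_sub, Complex.ofReal_mul, sub_mul, mul_assoc,
    integral_sub (hint _) (hint₀ _), integral_const_mul,
    integral_gaussianSpectralDensity_mul_exp hs₀,
    integral_gaussianSpectralDensity_mul_exp (hs₀.trans_le h)] using hpsd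

lemma exists_isPSDKernel_mul_integral_gaussian_sub_gaussian {μ : Measure ℝ} [IsFiniteMeasure μ]
    (hμ : ∀ᵐ s ∂μ, 0 < s) {s₀ s₁ : ℝ} (hs₀ : 0 < s₀) (hpos : μ (Ioo s₀ s₁) ≠ 0) :
    ∃ lam : ℝ, 0 ≤ lam ∧ IsPSDKernel fun x y : E =>
      (lam : ℂ) * ∫ s, (Real.exp (-(‖x - y‖ ^ 2 * s)) : ℂ) ∂μ -
        Real.exp (-(‖x - y‖ ^ 2 * s₀)) := by
  have hs₁ : s₀ < s₁ := nonempty_Ioo.1 (nonempty_of_measure_ne_zero hpos)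
  set θ : ℝ := (s₀ / s₁) ^ (Module.finrank ℝ E / 2 : ℝ)
  have hθ : 0 < θ := Real.rpow_pos_of_pos (div_pos hs₀ (hs₀.trans hs₁)) _
  have hθle (s : ℝ) (hs : s ∈ Ioo s₀ s₁) : θ ≤ (s₀ / s) ^ (Module.finrank ℝ E / 2 : ℝ) :=
    Real.rpow_le_rpow (div_pos hs₀ (hs₀.trans hs₁)).le
      (div_le_div_of_nonneg_left hs₀.le (hs₀.trans hs.1) hs.2.le) (by positivity)
  have hreal : 0 < μ.real (Ioo s₀ s₁) := ENNReal.toReal_pos hpos (measure_ne_top _ _)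
  have hpsd := IsPSDKernel.integral_sub_measureReal_mul (measurableSet_Ioo (a := s₀) (b := s₁))
    (hμ.mono fun s hs => isPSDKernel_exp_neg_sq_norm_sub_mul (E := E) hs)
    (fun s hs => isPSDKernel_gaussian_sub_gaussian hs₀ hs.1.le (hθle s hs))
    fun x y => (integrable_exp_neg_mul hμ (sq_nonneg ‖x - y‖)).ofReal
  refine ⟨(μ.real (Ioo s₀ s₁) * θ)⁻¹, by positivity, ?_⟩
  convert hpsd.const_mul (Complex.zero_le_real.2
    (by positivity : 0 ≤ (μ.real (Ioo s₀ s₁) * θ)⁻¹)) using 3 with x y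
  have : (μ.real (Ioo s₀ s₁) : ℂ) ≠ 0 := by exact_mod_cast hreal.ne'
  have : (θ : ℂ) ≠ 0 := by exact_mod_cast hθ.ne'
  push_cast
  field_simp

end GaussianMixture

section Representation

variable {d : ℕ}

lemma gaussK_eq_exp_neg_mul_inv (γ : ℝ) (x y : EuclideanSpace ℝ (Fin d)) :
    gaussK d γ x y = Real.exp (-(‖x - y‖ ^ 2 * γ⁻¹)) := by
  rw [gaussK, neg_div, div_eq_mul_inv]

lemma invMultiquadricK_eq_integral_gammaMeasure {β : ℝ} (hβ : 0 < β)
    (x y : EuclideanSpace ℝ (Fin d)) : invMultiquadricK d β x y =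
      ∫ s, (Real.exp (-(‖x - y‖ ^ 2 * s)) : ℂ) ∂gammaMeasure β 1 := by
  rw [invMultiquadricK, one_add_rpow_neg_eq_integral_gammaMeasure hβ (sq_nonneg _),
    integral_complex_ofReal]

lemma exists_isPSDKernel_invMultiquadricK_sub_gaussK {γ β : ℝ} (hγ : 0 < γ) (hβ : 0 < β) :
    ∃ lam : ℝ, 0 ≤ lam ∧ IsPSDKernel fun x y : EuclideanSpace ℝ (Fin d) =>
      (lam : ℂ) * invMultiquadricK d β x y - gaussK d γ x y := by
  have := isProbabilityMeasure_gammaMeasure hβ one_pos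
  have hs₀ : 0 < γ⁻¹ := inv_pos.2 hγ
  simpa only [gaussK_eq_exp_neg_mul_inv, invMultiquadricK_eq_integral_gammaMeasure hβ] using
    exists_isPSDKernel_mul_integral_gaussian_sub_gaussian (ae_pos_gammaMeasure β 1) hs₀
      (gammaMeasure_Ioo_ne_zero hβ one_pos hs₀.le (lt_add_one γ⁻¹))

end Representation

section AllDimensions

open scoped NNReal

lemma norm_single_sub_single_sq {ι : Type*} [Fintype ι] [DecidableEq ι] (i j : ι) (a b : ℝ) :
    ‖EuclideanSpace.single i a - EuclideanSpace.single j b‖ ^ 2 =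
      if i = j then (a - b) ^ 2 else a ^ 2 + b ^ 2 := by
  split_ifs with hij
  · rw [hij, ← PiLp.single_sub, PiLp.norm_single, Real.norm_eq_abs, sq_abs]
  · simp [norm_sub_sq_real, EuclideanSpace.inner_single_left, hij]

lemma IsPSDKernel.add_of_norm_sub_sq {φ : ℝ → ℂ} (h : ∀ d : ℕ, 0 < d →
      IsPSDKernel fun x y : EuclideanSpace ℝ (Fin d) => φ (‖x - y‖ ^ 2)) :
    IsPSDKernel fun u v : ℝ≥0 => φ (u + v) := by
  let δ (u v : ℝ≥0) : ℂ := φ ((√(u : ℝ) - √(v : ℝ)) ^ 2) - φ (u + v)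
  have hsum (N : ℕ) (u v : ℝ≥0) : ∑ i : Fin N, ∑ j : Fin N,
      φ (‖EuclideanSpace.single i √(u : ℝ) - EuclideanSpace.single j √(v : ℝ)‖ ^ 2) =
        N ^ 2 * φ (u + v) + N * δ u v := by
    have hterm (i j : Fin N) :
        φ (‖EuclideanSpace.single i √(u : ℝ) - EuclideanSpace.single j √(v : ℝ)‖ ^ 2) =
          φ (u + v) + if i = j then δ u v else 0 := by
      rw [norm_single_sub_single_sq]
      split_ifs <;> simp [δ]
    simp only [hterm, Finset.sum_add_distrib]
    simp [sq, mul_assoc]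
  refine .of_tendsto (l := atTop) (L := fun (N : ℕ) u v => φ (u + v) + (N : ℂ)⁻¹ * δ u v) ?_
    fun u v => ?_
  · filter_upwards [eventually_gt_atTop 0] with N hN
    have hN' : (N : ℂ) ≠ 0 := by exact_mod_cast hN.ne'
    have hpos : (0 : ℂ) ≤ ((N : ℂ) ^ 2)⁻¹ := by
      rw [inv_nonneg, ← Nat.cast_pow]
      exact Nat.cast_nonneg _
    convert ((h N hN).sum_sum
      fun (u : ℝ≥0) (i : Fin N) => EuclideanSpace.single i √(u : ℝ)).const_mul hpos using 3 with u v
    rw [hsum]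
    field_simp
  · simpa using ((tendsto_inv_atTop_nhds_zero_nat (𝕜 := ℂ)).mul_const (δ u v)).const_add (φ (u + v))

lemma sum_coeff_mul_exp_neg_add_mul (p : ℝ[X]) (η s : ℝ) :
    ∑ j ∈ p.support, ∑ k ∈ p.support,
      p.coeff j * p.coeff k * Real.exp (-((j * η + k * η) * s)) =
        p.eval (Real.exp (-(η * s))) ^ 2 := by
  rw [Polynomial.eval_eq_sum, Polynomial.sum_def, sq, Finset.sum_mul_sum]
  refine Finset.sum_congr rfl fun j _ => Finset.sum_congr rfl fun k _ => ?_
  rw [add_mul, neg_add, Real.exp_add, ← Real.exp_nat_mul, ← Real.exp_nat_mul]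
  ring_nf

lemma eval_exp_sq_le_mul_integral {μ : Measure ℝ} [IsFiniteMeasure μ] (hμ : ∀ᵐ s ∂μ, 0 < s)
    {lam s₀ : ℝ} (h : IsPSDKernel fun u v : ℝ≥0 =>
      (lam : ℂ) * ∫ s, (Real.exp (-((u + v : ℝ) * s)) : ℂ) ∂μ - Real.exp (-((u + v : ℝ) * s₀)))
    (p : ℝ[X]) {η : ℝ} (hη : 0 ≤ η) :
    p.eval (Real.exp (-(η * s₀))) ^ 2 ≤ lam * ∫ s, p.eval (Real.exp (-(η * s))) ^ 2 ∂μ := by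
  have hint (j k : ℕ) : Integrable
      (fun s => p.coeff j * p.coeff k * Real.exp (-((j * η + k * η) * s))) μ :=
    (integrable_exp_neg_mul hμ (by positivity)).const_mul _
  lift η to ℝ≥0 using hη
  have hform := h.sum_nonneg p.support (fun j => j * η) fun j => (p.coeff j : ℂ)
  simp only [integral_complex_ofReal, Complex.conj_ofReal] at hform
  norm_cast at hform
  simp only [NNReal.coe_add, NNReal.coe_mul, NNReal.coe_natCast, mul_sub,
    Finset.sum_sub_distrib, sum_coeff_mul_exp_neg_add_mul, sub_nonneg] at hform
  refine hform.trans_eq ?_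
  simp only [← sum_coeff_mul_exp_neg_add_mul]
  rw [integral_finsetSum _ fun j _ => integrable_finsetSum _ fun k _ => hint j k]
  simp only [integral_finsetSum _ fun k _ => hint _ k, integral_const_mul, Finset.mul_sum,
    mul_left_comm lam]

lemma tendsto_integral_pow_zero {α : Type*} [MeasurableSpace α] {μ : Measure α}
    [IsFiniteMeasure μ] {f : α → ℝ} (hf : AEStronglyMeasurable f μ) (h : ∀ᵐ s ∂μ, |f s| < 1) :
    Tendsto (fun n : ℕ => ∫ s, f s ^ n ∂μ) atTop (𝓝 0) := by
  rw [← integral_zero α ℝ (μ := μ)]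
  refine tendsto_integral_of_dominated_convergence 1 (fun n => hf.pow n) (integrable_const 1)
    (fun n => ?_) ?_
  · filter_upwards [h] with s hs
    rw [Real.norm_eq_abs, abs_pow]
    exact pow_le_one₀ (abs_nonneg _) hs.le
  · filter_upwards [h] with s hs
    exact tendsto_pow_atTop_nhds_zero_of_abs_lt_one hs

lemma abs_four_mul_one_sub_lt_one {t : ℝ} (ht : t ∈ Ioo 0 1) (hne : t ≠ 1 / 2) :
    |4 * t * (1 - t)| < 1 := by
  have : 0 < (t - 1 / 2) ^ 2 := by positivity [sub_ne_zero.2 hne]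
  rw [abs_of_pos (by nlinarith [ht.1, ht.2, mul_pos ht.1 (sub_pos.2 ht.2)])]
  nlinarith

lemma not_isPSDKernel_mul_integral_exp_sub_exp {μ : Measure ℝ} [IsFiniteMeasure μ]
    (hμ : ∀ᵐ s ∂μ, 0 < s) {lam s₀ : ℝ} (hs₀ : 0 < s₀) (hatom : μ {s₀} = 0) :
    ¬ IsPSDKernel fun u v : ℝ≥0 =>
      (lam : ℂ) * ∫ s, (Real.exp (-((u + v : ℝ) * s)) : ℂ) ∂μ -
        Real.exp (-((u + v : ℝ) * s₀)) := by
  intro h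
  set η := Real.log 2 / s₀
  have hη : 0 < η := div_pos (Real.log_pos one_lt_two) hs₀
  have hhalf : Real.exp (-(η * s₀)) = 1 / 2 := by
    rw [div_mul_cancel₀ _ hs₀.ne', Real.exp_neg, Real.exp_log two_pos, one_div]
  have hpeak : ∀ᵐ s ∂μ,
      |(4 * Real.exp (-(η * s)) * (1 - Real.exp (-(η * s)))) ^ 2| < 1 := by
    filter_upwards [hμ, compl_mem_ae_iff.2 hatom] with s hs hne
    have hexp : Real.exp (-(η * s)) ∈ Ioo 0 1 :=
      ⟨Real.exp_pos _, Real.exp_lt_one_iff.2 (neg_lt_zero.2 (mul_pos hη hs))⟩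
    have hexp_ne : Real.exp (-(η * s)) ≠ 1 / 2 := fun heq => hne <|
      mul_left_cancel₀ hη.ne' (neg_injective (Real.exp_injective (heq.trans hhalf.symm)))
    rw [abs_pow]
    exact pow_lt_one₀ (abs_nonneg _) (abs_four_mul_one_sub_lt_one hexp hexp_ne) two_ne_zero
  have hbound (n : ℕ) :
      1 ≤ lam * ∫ s, ((4 * Real.exp (-(η * s)) * (1 - Real.exp (-(η * s)))) ^ 2) ^ n ∂μ := by
    have := eval_exp_sq_le_mul_integral hμ h ((4 * Polynomial.X * (1 - Polynomial.X)) ^ n) hη.le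
    have hval : (4 * (1 / 2) * (1 - 1 / 2) : ℝ) = 1 := by norm_num
    simpa only [Polynomial.eval_pow, Polynomial.eval_mul, Polynomial.eval_sub, Polynomial.eval_X,
      Polynomial.eval_one, Polynomial.eval_ofNat, hhalf, hval, one_pow, ← pow_mul, mul_comm n]
      using this
  have hlim := (tendsto_integral_pow_zero
    (Continuous.aestronglyMeasurable (by fun_prop)) hpeak).const_mul lam
  rw [mul_zero] at hlim
  exact not_le_of_gt one_pos (ge_of_tendsto' hlim hbound)

lemma not_forall_isPSDKernel_invMultiquadricK_sub_gaussK {lam γ β : ℝ} (hγ : 0 < γ) (hβ : 0 < β) :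
    ¬ ∀ d : ℕ, 0 < d → IsPSDKernel fun x y : EuclideanSpace ℝ (Fin d) =>
      (lam : ℂ) * invMultiquadricK d β x y - gaussK d γ x y := by
  intro h
  have := isProbabilityMeasure_gammaMeasure hβ one_pos
  simp only [gaussK_eq_exp_neg_mul_inv, invMultiquadricK_eq_integral_gammaMeasure hβ] at h
  exact not_isPSDKernel_mul_integral_exp_sub_exp (ae_pos_gammaMeasure β 1) (inv_pos.2 hγ)
    (gammaMeasure_singleton β 1 γ⁻¹) (IsPSDKernel.add_of_norm_sub_sq
      (φ := fun r => (lam : ℂ) * ∫ s, (Real.exp (-(r * s)) : ℂ) ∂gammaMeasure β 1 -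
        Real.exp (-(r * γ⁻¹))) h)

end AllDimensions

/-- (a) In every dimension `d ≥ 1` no `λ ≥ 0` makes `λG_γ − M_β` positive semidefinite;
(b) in every dimension `d ≥ 1` there exists `λ ≥ 0` making `λM_β − G_γ` positive
semidefinite; (c) no single `λ ≥ 0` works for every dimension simultaneously. -/
theorem gaussian_invMultiquadric_inclusion (γ β : ℝ) (hγ : 0 < γ) (hβ : 0 < β) :
    (∀ d : ℕ, 0 < d →
      ¬ ∃ lam : ℝ, 0 ≤ lam ∧
        IsPSDKernel (fun x y : EuclideanSpace ℝ (Fin d) =>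
          (lam : ℂ) * gaussK d γ x y - invMultiquadricK d β x y)) ∧
    (∀ d : ℕ, 0 < d →
      ∃ lam : ℝ, 0 ≤ lam ∧
        IsPSDKernel (fun x y : EuclideanSpace ℝ (Fin d) =>
          (lam : ℂ) * invMultiquadricK d β x y - gaussK d γ x y)) ∧
    (¬ ∃ lam : ℝ, 0 ≤ lam ∧ ∀ d : ℕ, 0 < d →
      IsPSDKernel (fun x y : EuclideanSpace ℝ (Fin d) =>
        (lam : ℂ) * invMultiquadricK d β x y - gaussK d γ x y)) := by
  refine ⟨fun d hd ⟨lam, _, h⟩ => ?_, fun d _ => ?_, fun ⟨lam, _, h⟩ => ?_⟩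
  · exact not_isPSDKernel_gaussK_sub_invMultiquadricK hd hβ h
  · exact exists_isPSDKernel_invMultiquadricK_sub_gaussK hγ hβ
  · exact not_forall_isPSDKernel_invMultiquadricK_sub_gaussK hγ hβ h
end

section
/- Let X be a set, let (φ_n)_{n∈ℕ} be complex-valued functions on X, and let r : ℕ → ℝ be a real sequence. Assume that for every x ∈ X one has ∑_n |r_n| |φ_n(x)|² < ∞, and that the linear span of the sequences Φ(x) = (φ_n(x))_{n∈ℕ}, x ∈ X, is dense in the weighted space ℓ²_{|r|}(ℕ) (the Hilbert space of sequences c with ∑_n |r_n||c_n|² < ∞). Then the function K_r(x,y) = ∑_n r_n φ_n(x) conj(φ_n(y)) is a positive semidefinite kernel on X if and only if r_n ≥ 0 for every n ∈ ℕ. -/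
open scoped ComplexOrder

/-- `Φ(X)` has dense span in the weighted space `ℓ²_a(ℕ)`: every `c` with
`∑ a_n |c_n|² < ∞` that is orthogonal to every `Φ(x)` (i.e. all the weighted pairings
`∑' n, a_n φ_n(x) conj(c_n)` vanish) must vanish wherever the weight does not. -/
def HasDenseSpanIn {X : Type*} (φ : ℕ → X → ℂ) (a : ℕ → ℝ) : Prop :=
  ∀ c : ℕ → ℂ, (Summable fun n => a n * ‖c n‖ ^ 2) →
    (∀ x : X, ∑' n, (a n : ℂ) * φ n x * (starRingEnd ℂ) (c n) = 0) →
    ∀ n, a n ≠ 0 → c n = 0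

/-!
The diagonal quadratic form `Q(u) = ∑ sign(r_i) |u_i|²` on `ℓ²` pulls back along
`c ↦ (√|r_i| c_i)` to the form of `K_r`. If some `r_m < 0`, then `Q(u) ≤ ‖u‖² - 2 |u_m|²`, so
positivity of `K_r` forces `2 |u_m|² ≤ ‖u‖²` on the span of the features. This inequality is a
closed condition, hence by density it holds at the `m`-th unit vector, where it reads `2 ≤ 1`.
-/

section

variable {ι X 𝕜 : Type*} [RCLike 𝕜] {φ : ι → X → 𝕜} {r : ι → ℝ}

/-- The kernel `K_r(x, y) = ∑ r_i φ_i(x) conj(φ_i(y))` with Hilbert–Schmidt coefficients `r`.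
The value is `0` at pairs `(x, y)` where the series is not summable. -/
noncomputable def hilbertSchmidtKernel (φ : ι → X → 𝕜) (r : ι → ℝ) (x y : X) : 𝕜 :=
  ∑' i, (r i : 𝕜) * φ i x * (starRingEnd 𝕜) (φ i y)

lemma summable_mul_mul_conj {f g : ι → 𝕜} (hf : Summable fun i => |r i| * ‖f i‖ ^ 2)
    (hg : Summable fun i => |r i| * ‖g i‖ ^ 2) :
    Summable fun i => (r i : 𝕜) * f i * (starRingEnd 𝕜) (g i) := by
  refine Summable.of_norm_bounded (hf.add hg) fun i => ?_
  have h_amgm : ‖f i‖ * ‖g i‖ ≤ ‖f i‖ ^ 2 + ‖g i‖ ^ 2 := by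
    nlinarith [two_mul_le_add_sq ‖f i‖ ‖g i‖, norm_nonneg (f i), norm_nonneg (g i)]
  calc ‖(r i : 𝕜) * f i * (starRingEnd 𝕜) (g i)‖
      = |r i| * (‖f i‖ * ‖g i‖) := by
        rw [norm_mul, norm_mul, RCLike.norm_ofReal, RCLike.norm_conj, mul_assoc]
    _ ≤ |r i| * (‖f i‖ ^ 2 + ‖g i‖ ^ 2) := by gcongr
    _ = |r i| * ‖f i‖ ^ 2 + |r i| * ‖g i‖ ^ 2 := mul_add _ _ _

lemma mul_norm_sum_sq_eq_sum_sum {J : Type*} [Fintype J] (s : ℝ) (c z : J → 𝕜) :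
    ((s * ‖∑ j, c j * z j‖ ^ 2 : ℝ) : 𝕜) =
      ∑ j, ∑ k, c j * (starRingEnd 𝕜) (c k) * ((s : 𝕜) * z j * (starRingEnd 𝕜) (z k)) := by
  push_cast
  rw [← RCLike.mul_conj, map_sum, Finset.sum_mul_sum]
  simp only [Finset.mul_sum, map_mul]
  exact Finset.sum_congr rfl fun j _ => Finset.sum_congr rfl fun k _ => by ring

lemma sum_sum_hilbertSchmidtKernel_eq_tsum (hs : ∀ x, Summable fun i => |r i| * ‖φ i x‖ ^ 2)
    {J : Type*} [Fintype J] (x : J → X) (c : J → 𝕜) :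
    ∑ j, ∑ k, c j * (starRingEnd 𝕜) (c k) * hilbertSchmidtKernel φ r (x j) (x k) =
      ((∑' i, r i * ‖∑ j, c j * φ i (x j)‖ ^ 2 : ℝ) : 𝕜) := by
  rw [RCLike.ofReal_tsum]
  simp only [mul_norm_sum_sq_eq_sum_sum]
  refine (HasSum.tsum_eq ?_).symm
  exact hasSum_sum fun j _ => hasSum_sum fun k _ =>
    (summable_mul_mul_conj (hs (x j)) (hs (x k))).hasSum.mul_left _

lemma hasSum_norm_apply_sq (u : lp (fun _ : ι => 𝕜) 2) :
    HasSum (fun i => ‖u i‖ ^ 2) (‖u‖ ^ 2) := by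
  simpa using lp.hasSum_norm (p := 2) (by norm_num) u

lemma norm_sqrt_abs_mul_sq (s : ℝ) (z : 𝕜) : ‖(√|s| : 𝕜) * z‖ ^ 2 = |s| * ‖z‖ ^ 2 := by
  rw [norm_mul, mul_pow, RCLike.norm_ofReal, sq_abs, Real.sq_sqrt (abs_nonneg s)]

lemma memℓp_sqrt_abs_mul {f : ι → 𝕜} (hf : Summable fun i => |r i| * ‖f i‖ ^ 2) :
    Memℓp (fun i => (√|r i| : 𝕜) * f i) 2 := by
  refine memℓp_gen (hf.congr fun i => ?_)
  simp [← norm_sqrt_abs_mul_sq]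

/-- The span of the features `Φ(x) = (φ_i(x))_i`, transported from the weighted space `ℓ²_{|r|}`
to the unweighted space `ℓ²` by `c ↦ (√|r_i| c_i)_i`. -/
noncomputable def featureSpan (hs : ∀ x, Summable fun i => |r i| * ‖φ i x‖ ^ 2) :
    Submodule 𝕜 (lp (fun _ : ι => 𝕜) 2) :=
  Submodule.span 𝕜 (Set.range fun x => ⟨_, memℓp_sqrt_abs_mul (hs x)⟩)

lemma exists_eq_sqrt_abs_mul_sum_of_mem_featureSpan
    {hs : ∀ x, Summable fun i => |r i| * ‖φ i x‖ ^ 2} {u : lp (fun _ : ι => 𝕜) 2}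
    (hu : u ∈ featureSpan hs) :
    ∃ (n : ℕ) (x : Fin n → X) (c : Fin n → 𝕜),
      ∀ i, u i = (√|r i| : 𝕜) * ∑ j, c j * φ i (x j) := by
  obtain ⟨n, c, g, rfl⟩ := Submodule.mem_span_set'.1 hu
  choose x hx using fun j => (g j).2
  refine ⟨n, x, c, fun i => ?_⟩
  simp only [← hx, lp.coeFn_sum, Finset.sum_apply, lp.coeFn_smul, Pi.smul_apply, smul_eq_mul,
    Finset.mul_sum, mul_left_comm]

lemma two_mul_norm_apply_sq_le {u : lp (fun _ : ι => 𝕜) 2} {f : ι → 𝕜}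
    (hu : ∀ i, u i = (√|r i| : 𝕜) * f i) (hf : 0 ≤ ∑' i, r i * ‖f i‖ ^ 2) {m : ι}
    (hm : r m < 0) : 2 * ‖u m‖ ^ 2 ≤ ‖u‖ ^ 2 := by
  have hu_sq (i : ι) : ‖u i‖ ^ 2 = |r i| * ‖f i‖ ^ 2 := by rw [hu, norm_sqrt_abs_mul_sq]
  have h_summable : Summable fun i => r i * ‖f i‖ ^ 2 :=
    (hasSum_norm_apply_sq u).summable.of_norm_bounded fun i => by
      rw [hu_sq, norm_mul, Real.norm_eq_abs, Real.norm_of_nonneg (sq_nonneg _)]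
  have h_nonneg (i : ι) : 0 ≤ ‖u i‖ ^ 2 - r i * ‖f i‖ ^ 2 := by
    rw [hu_sq, ← sub_mul]
    exact mul_nonneg (sub_nonneg.2 (le_abs_self _)) (sq_nonneg _)
  calc 2 * ‖u m‖ ^ 2 = ‖u m‖ ^ 2 - r m * ‖f m‖ ^ 2 := by
        rw [hu_sq, abs_of_neg hm]; ring
    _ ≤ ‖u‖ ^ 2 - ∑' i, r i * ‖f i‖ ^ 2 :=
        le_hasSum ((hasSum_norm_apply_sq u).sub h_summable.hasSum) m fun i _ => h_nonneg i
    _ ≤ ‖u‖ ^ 2 := sub_le_self _ hf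

/-- `HasDenseSpanIn` for an arbitrary index type and scalars `ℝ` or `ℂ`: for a nonnegative weight
`a`, the features `Φ(x) = (φ_i(x))_i` have dense span in `ℓ²_a(ι)`, expressed by the triviality of
their orthogonal complement (up to coordinates of weight `0`, which `ℓ²_a` does not see). -/
def HasDenseWeightedSpan (φ : ι → X → 𝕜) (a : ι → ℝ) : Prop :=
  ∀ c : ι → 𝕜, (Summable fun i => a i * ‖c i‖ ^ 2) →
    (∀ x : X, ∑' i, (a i : 𝕜) * φ i x * (starRingEnd 𝕜) (c i) = 0) →
    ∀ i, a i ≠ 0 → c i = 0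

lemma summable_abs_mul_norm_div_sqrt_sq (r : ι → ℝ) (w : lp (fun _ : ι => 𝕜) 2) :
    Summable fun i => |r i| * ‖w i / (√|r i| : 𝕜)‖ ^ 2 := by
  refine (hasSum_norm_apply_sq w).summable.of_nonneg_of_le (fun i => by positivity) fun i => ?_
  calc |r i| * ‖w i / (√|r i| : 𝕜)‖ ^ 2 = |r i| / |r i| * ‖w i‖ ^ 2 := by
        rw [norm_div, div_pow, RCLike.norm_ofReal, sq_abs, Real.sq_sqrt (abs_nonneg _)]; ring
    _ ≤ ‖w i‖ ^ 2 := mul_le_of_le_one_left (sq_nonneg _) (div_self_le_one _)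

lemma abs_mul_mul_conj_div_sqrt (s : ℝ) (z w : 𝕜) :
    ((|s| : ℝ) : 𝕜) * z * (starRingEnd 𝕜) (w / (√|s| : 𝕜)) = inner 𝕜 w ((√|s| : 𝕜) * z) := by
  rw [RCLike.inner_apply, map_div₀, RCLike.conj_ofReal]
  calc ((|s| : ℝ) : 𝕜) * z * ((starRingEnd 𝕜) w / (√|s| : 𝕜))
      = ((|s| / √|s| : ℝ) : 𝕜) * z * (starRingEnd 𝕜) w := by push_cast; ring
    _ = (√|s| : 𝕜) * z * (starRingEnd 𝕜) w := by rw [Real.div_sqrt]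

lemma apply_eq_zero_of_mem_featureSpan_orthogonal
    {hs : ∀ x, Summable fun i => |r i| * ‖φ i x‖ ^ 2}
    (hd : HasDenseWeightedSpan φ fun i => |r i|) {w : lp (fun _ : ι => 𝕜) 2}
    (hw : w ∈ (featureSpan hs)ᗮ) {m : ι} (hm : r m ≠ 0) : w m = 0 := by
  have h_pairing (x : X) :
      ∑' i, ((|r i| : ℝ) : 𝕜) * φ i x * (starRingEnd 𝕜) (w i / (√|r i| : 𝕜)) = 0 := by
    simp only [abs_mul_mul_conj_div_sqrt]
    have h_inner := (Submodule.mem_orthogonal' _ _).1 hw _ (Submodule.subset_span ⟨x, rfl⟩)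
    rwa [lp.inner_eq_tsum] at h_inner
  have h_div : w m / (√|r m| : 𝕜) = 0 :=
    hd _ (summable_abs_mul_norm_div_sqrt_sq r w) h_pairing m (abs_ne_zero.2 hm)
  have h_sqrt : (√|r m| : 𝕜) ≠ 0 :=
    RCLike.ofReal_ne_zero.2 (Real.sqrt_ne_zero'.2 (abs_pos.2 hm))
  exact (div_eq_zero_iff.1 h_div).resolve_right h_sqrt

lemma single_mem_topologicalClosure_featureSpan [DecidableEq ι]
    {hs : ∀ x, Summable fun i => |r i| * ‖φ i x‖ ^ 2}
    (hd : HasDenseWeightedSpan φ fun i => |r i|) {m : ι} (hm : r m ≠ 0) (z : 𝕜) :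
    lp.single 2 m z ∈ (featureSpan hs).topologicalClosure := by
  rw [← Submodule.orthogonal_orthogonal_eq_closure, Submodule.mem_orthogonal]
  intro w hw
  rw [lp.inner_single_right, apply_eq_zero_of_mem_featureSpan_orthogonal hd hw hm, inner_zero_left]

lemma isClosed_setOf_two_mul_norm_apply_sq_le (m : ι) :
    IsClosed {u : lp (fun _ : ι => 𝕜) 2 | 2 * ‖u m‖ ^ 2 ≤ ‖u‖ ^ 2} := by
  have h_eval : Continuous fun u : lp (fun _ : ι => 𝕜) 2 => u m :=
    (lp.evalCLM 𝕜 (fun _ : ι => 𝕜) 2 m).continuous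
  exact isClosed_le (continuous_const.mul (h_eval.norm.pow 2)) (continuous_norm.pow 2)

lemma nonneg_of_forall_tsum_nonneg (hs : ∀ x, Summable fun i => |r i| * ‖φ i x‖ ^ 2)
    (hd : HasDenseWeightedSpan φ fun i => |r i|)
    (hQ : ∀ (n : ℕ) (x : Fin n → X) (c : Fin n → 𝕜),
      0 ≤ ∑' i, r i * ‖∑ j, c j * φ i (x j)‖ ^ 2) (m : ι) : 0 ≤ r m := by
  classical
  by_contra! hm
  have h_span : (featureSpan hs : Set (lp (fun _ : ι => 𝕜) 2)) ⊆
      {u | 2 * ‖u m‖ ^ 2 ≤ ‖u‖ ^ 2} := fun u hu => by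
    obtain ⟨n, x, c, hu⟩ := exists_eq_sqrt_abs_mul_sum_of_mem_featureSpan hu
    exact two_mul_norm_apply_sq_le hu (hQ n x c) hm
  have h_single : 2 * ‖lp.single (E := fun _ : ι => 𝕜) 2 m 1 m‖ ^ 2 ≤
      ‖lp.single (E := fun _ : ι => 𝕜) 2 m 1‖ ^ 2 :=
    closure_minimal h_span (isClosed_setOf_two_mul_norm_apply_sq_le m)
      (single_mem_topologicalClosure_featureSpan hd hm.ne 1)
  rw [lp.single_apply_self, lp.norm_single two_pos, norm_one] at h_single
  norm_num at h_single

end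

theorem hilbertSchmidt_psd_iff_nonneg_general {ι X 𝕜 : Type*} [RCLike 𝕜] (φ : ι → X → 𝕜)
    (r : ι → ℝ) (hs : ∀ x, Summable fun i => |r i| * ‖φ i x‖ ^ 2)
    (hd : HasDenseWeightedSpan φ fun i => |r i|) :
    (∀ (n : ℕ) (x : Fin n → X) (c : Fin n → 𝕜),
      0 ≤ ∑ j, ∑ k, c j * (starRingEnd 𝕜) (c k) * hilbertSchmidtKernel φ r (x j) (x k)) ↔
      ∀ i, 0 ≤ r i := by
  simp only [sum_sum_hilbertSchmidtKernel_eq_tsum hs, RCLike.ofReal_nonneg]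
  exact ⟨nonneg_of_forall_tsum_nonneg hs hd, fun hr n x c =>
    tsum_nonneg fun i => mul_nonneg (hr i) (sq_nonneg _)⟩

/-- If `∑ |r_n| |φ_n(x)|² < ∞` for all `x` and the span of the sequences
`Φ(x) = (φ_n(x))_n` is dense in `ℓ²_{|r|}(ℕ)`, then
`K_r(x,y) = ∑' n, r_n φ_n(x) conj(φ_n(y))` is a positive semidefinite kernel on `X`
iff `r_n ≥ 0` for every `n`. -/
theorem hilbertSchmidt_psd_iff_nonneg {X : Type*} (φ : ℕ → X → ℂ) (r : ℕ → ℝ)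
    (hs : ∀ x, Summable fun n => |r n| * ‖φ n x‖ ^ 2)
    (hd : HasDenseSpanIn φ (fun n => |r n|))
    (Kr : X → X → ℂ)
    (hKr : ∀ x y, Kr x y = ∑' n, (r n : ℂ) * φ n x * (starRingEnd ℂ) (φ n y)) :
    IsPSDKernel Kr ↔ ∀ n, 0 ≤ r n := by
  obtain rfl : Kr = hilbertSchmidtKernel φ r := funext₂ hKr
  exact hilbertSchmidt_psd_iff_nonneg_general φ r hs hd
end
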